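/- arXiv:2010.11542 — 5 statements merged into one kernel-verified Lean document; each statement's English description precedes it below -/
import Mathlib

section
/- Let D ⊊ ℝⁿ be a domain whose boundary ∂D is C-uniformly perfect with respect to the Euclidean metric, let η : [0,∞) → [0,∞) be a homeomorphism, and let f : cl(D) → cl(D) be an η-quasisymmetric homeomorphism with f equal to the identity on ∂D. Then j_D(x, f(x)) ≤ 2 log(1 + 4η(C)) for all x ∈ D. -/
/-!
Write `y = f x`, and let `z`, `u` be boundary points nearest to `x` and to `y`.

* *Bound by `d(x)`.*  Uniform perfectness at `z` gives a boundary point `a` with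
  `d(x)/C ≤ |z - a| < d(x)`.  Quasisymmetry centred at the fixed point `z`, applied to `x` and to
  the fixed point `a`, gives `|z - y| ≤ η(C) d(x)`, hence `|x - y| ≤ (1 + η(C)) d(x)`
  (`dist_image_nearest_le`).
* *Bound by `d(y)`.*  Put `s = |u - x|`; it suffices to show `s ≤ 2 (1 + η(C)) d(y)`
  (`dist_nearest_image_le`).
  If `C < 2`, take a boundary point `a` with `s/C ≤ |u - a| < s` and use quasisymmetry centred
  at `u`.  If `C ≥ 2`, there is a boundary point `a` with `s/2 ≤ |u - a|` and `|x - a| ≤ C s`, and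
  quasisymmetry centred at `x` gives `|y - a| ≤ η(C) d(y)`.

The required boundary points exist because a bounded domain has boundary points at least as far
from a given boundary point as any of its interior points (`exists_frontier_far`), while an
unbounded one has `∞` in its boundary (`infty_mem_sphFrontier`).  Since `η(C) ≥ η(1) ≥ 1`, both
bounds are absorbed by `(1 + 4 η(C))²`.
-/

open Metric Filter Set Topology

noncomputable section

/-- Euclidean `n`-space. -/
abbrev Euc (n : ℕ) : Type := EuclideanSpace ℝ (Fin n)

/-- Distance from `x` to the (Euclidean) boundary of `D`. -/
def bdist {n : ℕ} (D : Set (Euc n)) (x : Euc n) : ℝ :=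
  Metric.infDist x (frontier D)

/-- The distance ratio metric `j_D`. -/
def jDist {n : ℕ} (D : Set (Euc n)) (x y : Euc n) : ℝ :=
  Real.log (1 + dist x y / min (bdist D x) (bdist D y))

/-- `γ` is a (differentiable) curve from `x` to `y` staying in `D`, parametrized on `[0,1]`. -/
def IsCurveIn {n : ℕ} (D : Set (Euc n)) (x y : Euc n) (γ : ℝ → Euc n) : Prop :=
  (∀ t : ℝ, DifferentiableAt ℝ γ t) ∧ γ 0 = x ∧ γ 1 = y ∧ ∀ t ∈ Set.Icc (0:ℝ) 1, γ t ∈ D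

/-- The line integral `∫_γ ρ ds` of a density `ρ` along the curve `γ`. -/
def curveInt {n : ℕ} (ρ : Euc n → ℝ) (γ : ℝ → Euc n) : ℝ :=
  ∫ t in (0:ℝ)..1, ρ (γ t) * ‖deriv γ t‖

/-- The quasihyperbolic distance `k_D`. -/
def qhDist {n : ℕ} (D : Set (Euc n)) (x y : Euc n) : ℝ :=
  sInf { L | ∃ γ : ℝ → Euc n, IsCurveIn D x y γ ∧
    L = curveInt (fun z => 1 / bdist D z) γ }

/-- Euclidean length of the piece of `γ` parametrized on `[a,b]`. -/
def eucLen {n : ℕ} (γ : ℝ → Euc n) (a b : ℝ) : ℝ := ∫ t in a..b, ‖deriv γ t‖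

/-- The inner Euclidean metric of `D`. -/
def innerDist {n : ℕ} (D : Set (Euc n)) (x y : Euc n) : ℝ :=
  sInf { L | ∃ γ : ℝ → Euc n, IsCurveIn D x y γ ∧ L = eucLen γ 0 1 }

/-- Control functions: (increasing) self-homeomorphisms `η : [0,∞) → [0,∞)`. -/
structure CtrlFun (η : ℝ → ℝ) : Prop where
  mono : StrictMonoOn η (Set.Ici 0)
  cont : ContinuousOn η (Set.Ici 0)
  zero : η 0 = 0
  surj : Set.SurjOn η (Set.Ici 0) (Set.Ici 0)

/-- `f` is a self-homeomorphism of the set `S`. -/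
def HomeoOn {X : Type*} [TopologicalSpace X] (f : X → X) (S : Set X) : Prop :=
  Set.BijOn f S S ∧ ContinuousOn f S ∧
    ∃ g : X → X, Set.InvOn g f S S ∧ Set.MapsTo g S S ∧ ContinuousOn g S

/-- The quasiconformality ratio `H_f(x,r)` of `f` at `x` at scale `r`. -/
def qcH {n : ℕ} (D : Set (Euc n)) (f : Euc n → Euc n) (x : Euc n) (r : ℝ) : ℝ :=
  sSup {d : ℝ | ∃ y ∈ D, dist x y = r ∧ d = dist (f x) (f y)} /
    sInf {d : ℝ | ∃ z ∈ D, dist x z = r ∧ d = dist (f x) (f z)}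

/-- Metric definition of `K`-quasiconformality on a domain `D`. -/
def IsQCOn {n : ℕ} (D : Set (Euc n)) (f : Euc n → Euc n) (K : ℝ) : Prop :=
  ∀ x ∈ D, Filter.limsup (qcH D f x) (𝓝[>] (0:ℝ)) ≤ K

/-- `C`-uniform perfectness of `S` with respect to the distance function `ρ`. -/
def UnifPerfectWith {β : Type*} (ρ : β → β → ℝ) (S : Set β) (C : ℝ) : Prop :=
  ∀ x ∈ S, ∀ r > 0, (∃ y ∈ S, r ≤ ρ x y) → ∃ y ∈ S, ρ x y < r ∧ r / C ≤ ρ x y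

/-- `η`-quasisymmetry of `f` on `S`, from distance `ρX` to distance `ρY`. -/
def QSWith {α β : Type*} (ρX : α → α → ℝ) (ρY : β → β → ℝ) (S : Set α)
    (f : α → β) (η : ℝ → ℝ) : Prop :=
  ∀ t > 0, ∀ x ∈ S, ∀ a ∈ S, ∀ b ∈ S,
    ρX x a ≤ t * ρX x b → ρY (f x) (f a) ≤ η t * ρY (f x) (f b)

/-- Cross ratio of a quadruple with respect to the distance function `ρ`. -/
def crossRatioWith {β : Type*} (ρ : β → β → ℝ) (a b c d : β) : ℝ :=
  (ρ a c * ρ b d) / (ρ a b * ρ c d)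

/-- View a point of the one-point compactification as an `Option`. -/
def toOpt {n : ℕ} (a : OnePoint (Euc n)) : Option (Euc n) := a

/-- The chordal (spherical) metric on the Riemann sphere `ℝⁿ ∪ {∞}`. -/
def chordal {n : ℕ} (a b : OnePoint (Euc n)) : ℝ :=
  Option.elim (toOpt a)
    (Option.elim (toOpt b) 0 fun y => 1 / Real.sqrt (1 + ‖y‖ ^ 2))
    fun x => Option.elim (toOpt b) (1 / Real.sqrt (1 + ‖x‖ ^ 2))
      fun y => dist x y / (Real.sqrt (1 + ‖x‖ ^ 2) * Real.sqrt (1 + ‖y‖ ^ 2))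

/-- Closure of `D` in the Riemann sphere. -/
def sphClosure {n : ℕ} (D : Set (Euc n)) : Set (OnePoint (Euc n)) :=
  closure ((fun x : Euc n => (x : OnePoint (Euc n))) '' D)

/-- Boundary of `D` in the Riemann sphere. -/
def sphFrontier {n : ℕ} (D : Set (Euc n)) : Set (OnePoint (Euc n)) :=
  frontier ((fun x : Euc n => (x : OnePoint (Euc n))) '' D)

/-- `C`-uniform perfectness, with respect to the Euclidean metric, of the boundary of `D`
taken in the Riemann sphere (the point `∞` counts as lying outside every Euclidean ball). -/
def sphPerfectEuc {n : ℕ} (D : Set (Euc n)) (C : ℝ) : Prop :=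
  ∀ z : Euc n, (z : OnePoint (Euc n)) ∈ sphFrontier D → ∀ r > 0,
    (∃ w ∈ sphFrontier D, ∀ w' : Euc n, w = (w' : OnePoint (Euc n)) → r ≤ dist z w') →
    ∃ w : Euc n, (w : OnePoint (Euc n)) ∈ sphFrontier D ∧ dist z w < r ∧ r / C ≤ dist z w

/-- Gromov product with respect to the quasihyperbolic metric of `D`, base point `w`. -/
def gprod {n : ℕ} (D : Set (Euc n)) (w x y : Euc n) : ℝ :=
  (qhDist D x w + qhDist D y w - qhDist D x y) / 2

/-- A Gromov sequence of `(D, k_D)`. -/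
def GromovSeq {n : ℕ} (D : Set (Euc n)) (w : Euc n) (s : ℕ → Euc n) : Prop :=
  (∀ i, s i ∈ D) ∧
    Filter.Tendsto (fun p : ℕ × ℕ => gprod D w (s p.1) (s p.2)) Filter.atTop Filter.atTop

/-- Equivalence of Gromov sequences. -/
def GromovEquiv {n : ℕ} (D : Set (Euc n)) (w : Euc n) (s t : ℕ → Euc n) : Prop :=
  Filter.Tendsto (fun i => gprod D w (s i) (t i)) Filter.atTop Filter.atTop

/-- The Gromov boundary of `(D, k_D)`: equivalence classes of Gromov sequences. -/
def GromovBoundary {n : ℕ} (D : Set (Euc n)) (w : Euc n) : Type :=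
  Quot (fun s t : {u : ℕ → Euc n // GromovSeq D w u} => GromovEquiv D w s.1 t.1)

/-- `e^{-ε(ξ|ζ)_w}` for boundary points `ξ, ζ` (via representing sequences). -/
def visRho {n : ℕ} (D : Set (Euc n)) (w : Euc n) (ε : ℝ) (ξ ζ : GromovBoundary D w) : ℝ :=
  sSup { r : ℝ | ∃ s t : {u : ℕ → Euc n // GromovSeq D w u},
    Quot.mk _ s = ξ ∧ Quot.mk _ t = ζ ∧
    r = Filter.limsup (fun i => Real.exp (-ε * gprod D w (s.1 i) (t.1 i))) Filter.atTop }

/-- The visual metric `d_{w,ε}` on the Gromov boundary (chain metric built from `visRho`). -/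
def visDist {n : ℕ} (D : Set (Euc n)) (w : Euc n) (ε : ℝ) (ξ ζ : GromovBoundary D w) : ℝ :=
  sInf { L : ℝ | ∃ (m : ℕ) (c : ℕ → GromovBoundary D w), 1 ≤ m ∧ c 0 = ξ ∧ c m = ζ ∧
    L = ∑ i ∈ Finset.range m, visRho D w ε (c i) (c (i + 1)) }

/-- `γ` is a quasihyperbolic geodesic from `x` to `y` in `D`. -/
def QHGeodesic {n : ℕ} (D : Set (Euc n)) (x y : Euc n) (γ : ℝ → Euc n) : Prop :=
  γ 0 = x ∧ γ (qhDist D x y) = y ∧ (∀ t ∈ Set.Icc 0 (qhDist D x y), γ t ∈ D) ∧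
    ∀ s ∈ Set.Icc 0 (qhDist D x y), ∀ t ∈ Set.Icc 0 (qhDist D x y),
      qhDist D (γ s) (γ t) = |s - t|

/-- `D` is a `δ`-hyperbolic domain: `(D, k_D)` is geodesic and has `δ`-thin triangles. -/
def GromovHypDomain {n : ℕ} (D : Set (Euc n)) (δ : ℝ) : Prop :=
  (∀ x ∈ D, ∀ y ∈ D, ∃ γ : ℝ → Euc n, QHGeodesic D x y γ) ∧
    ∀ x ∈ D, ∀ y ∈ D, ∀ z ∈ D, ∀ γ₁ γ₂ γ₃ : ℝ → Euc n,
      QHGeodesic D x y γ₁ → QHGeodesic D y z γ₂ → QHGeodesic D z x γ₃ →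
      ∀ t ∈ Set.Icc 0 (qhDist D x y), ∃ s : ℝ,
        (s ∈ Set.Icc 0 (qhDist D y z) ∧ qhDist D (γ₁ t) (γ₂ s) ≤ δ) ∨
        (s ∈ Set.Icc 0 (qhDist D z x) ∧ qhDist D (γ₁ t) (γ₃ s) ≤ δ)

/-- The Bonk–Heinonen–Koskela uniformization metric `d_ε` with base point `w`. -/
def bhkDist {n : ℕ} (D : Set (Euc n)) (w : Euc n) (ε : ℝ) (x y : Euc n) : ℝ :=
  sInf { L | ∃ γ : ℝ → Euc n, IsCurveIn D x y γ ∧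
    L = curveInt (fun z => Real.exp (-ε * qhDist D z w) / bdist D z) γ }

/-- A Cauchy sequence (with respect to the distance `ρ`) in `D` which does not converge to a
point of `D`; it represents a point of the metric boundary of `(D, ρ)`. -/
def BCauchyIn {α : Type*} (ρ : α → α → ℝ) (D : Set α) (s : ℕ → α) : Prop :=
  (∀ i, s i ∈ D) ∧ (∀ e > 0, ∃ N : ℕ, ∀ i ≥ N, ∀ j ≥ N, ρ (s i) (s j) < e) ∧
    ¬ ∃ p ∈ D, Filter.Tendsto (fun i => ρ (s i) p) Filter.atTop (nhds 0)

/-- Distance from `z` to the metric boundary of `(D, ρ)`. -/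
def bdrySeqDist {α : Type*} (ρ : α → α → ℝ) (D : Set α) (z : α) : ℝ :=
  sInf { r : ℝ | ∃ s : ℕ → α, BCauchyIn ρ D s ∧
    Filter.Tendsto (fun i => ρ z (s i)) Filter.atTop (nhds r) }

/-- The diameter of `(D, ρ)`. -/
def seqDiam {α : Type*} (ρ : α → α → ℝ) (D : Set α) : ℝ :=
  sSup { r : ℝ | ∃ x ∈ D, ∃ y ∈ D, r = ρ x y }

/-- The diameter of the metric boundary of `(D, ρ)`. -/
def bdryDiam {α : Type*} (ρ : α → α → ℝ) (D : Set α) : ℝ :=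
  sSup { r : ℝ | ∃ s t : ℕ → α, BCauchyIn ρ D s ∧ BCauchyIn ρ D t ∧
    Filter.Tendsto (fun i => ρ (s i) (t i)) Filter.atTop (nhds r) }

/-- `D` is an inner `A`-uniform domain. -/
def InnerUniform {n : ℕ} (D : Set (Euc n)) (A : ℝ) : Prop :=
  ∀ x ∈ D, ∀ y ∈ D, ∃ γ : ℝ → Euc n, IsCurveIn D x y γ ∧
    eucLen γ 0 1 ≤ A * innerDist D x y ∧
    ∀ t ∈ Set.Icc (0:ℝ) 1, min (eucLen γ 0 t) (eucLen γ t 1) ≤ A * bdist D (γ t)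

/-- `(D, d_I)` is unbounded. -/
def InnerUnbounded {n : ℕ} (D : Set (Euc n)) : Prop :=
  ¬ ∃ R : ℝ, ∀ x ∈ D, ∀ y ∈ D, innerDist D x y ≤ R

/-- `C`-uniform perfectness of the inner boundary `∂_I D` (points of the metric boundary of
`(D, d_I)` are represented by Cauchy sequences, and the point `∞` of `Ĥ(D)` counts as lying
outside every ball when `(D, d_I)` is unbounded). -/
def innerBdryPerfect {n : ℕ} (D : Set (Euc n)) (C : ℝ) : Prop :=
  ∀ s : ℕ → Euc n, BCauchyIn (innerDist D) D s → ∀ r > 0,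
    ((∃ t : ℕ → Euc n, BCauchyIn (innerDist D) D t ∧
        r ≤ Filter.limsup (fun i => innerDist D (s i) (t i)) Filter.atTop) ∨
      InnerUnbounded D) →
    ∃ t : ℕ → Euc n, BCauchyIn (innerDist D) D t ∧
      Filter.limsup (fun i => innerDist D (s i) (t i)) Filter.atTop < r ∧
      r / C ≤ Filter.limsup (fun i => innerDist D (s i) (t i)) Filter.atTop

/-! ### Quasihyperbolic geometry in a general metric space -/

/-- Metric speed (metric derivative) of a curve at time `t`. -/
def mSpeed {X : Type*} [MetricSpace X] (γ : ℝ → X) (t : ℝ) : ℝ :=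
  Filter.limsup (fun h => dist (γ (t + h)) (γ t) / |h|) (𝓝[≠] (0:ℝ))

/-- Length of the piece of `γ` on `[a,b]`, in a metric space. -/
def mLen {X : Type*} [MetricSpace X] (γ : ℝ → X) (a b : ℝ) : ℝ := ∫ t in a..b, mSpeed γ t

/-- `γ` is a rectifiable (Lipschitz) curve from `x` to `y` in `D`, in a metric space. -/
def mCurveIn {X : Type*} [MetricSpace X] (D : Set X) (x y : X) (γ : ℝ → X) : Prop :=
  (∃ K : NNReal, LipschitzWith K γ) ∧ γ 0 = x ∧ γ 1 = y ∧ ∀ t ∈ Set.Icc (0:ℝ) 1, γ t ∈ D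

/-- Quasihyperbolic distance in a general metric space. -/
def mQhDist {X : Type*} [MetricSpace X] (D : Set X) (x y : X) : ℝ :=
  sInf { L | ∃ γ : ℝ → X, mCurveIn D x y γ ∧
    L = ∫ t in (0:ℝ)..1, mSpeed γ t / Metric.infDist (γ t) (frontier D) }

/-- `D` is an `A`-uniform domain in a metric space. -/
def mUniform {X : Type*} [MetricSpace X] (D : Set X) (A : ℝ) : Prop :=
  ∀ x ∈ D, ∀ y ∈ D, ∃ γ : ℝ → X, mCurveIn D x y γ ∧ mLen γ 0 1 ≤ A * dist x y ∧
    ∀ t ∈ Set.Icc (0:ℝ) 1,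
      min (mLen γ 0 t) (mLen γ t 1) ≤ A * Metric.infDist (γ t) (frontier D)


theorem coe_mem_sphFrontier {n : ℕ} {D : Set (Euc n)} {z : Euc n} :
    (z : OnePoint (Euc n)) ∈ sphFrontier D ↔ z ∈ frontier D := by
  have h := (OnePoint.isOpenEmbedding_coe (X := Euc n)).isOpenMap.preimage_frontier_eq_frontier_preimage
    OnePoint.continuous_coe ((fun x : Euc n => (x : OnePoint (Euc n))) '' D)
  have h2 : (fun x : Euc n => (x : OnePoint (Euc n))) ⁻¹'
      ((fun x : Euc n => (x : OnePoint (Euc n))) '' D) = D :=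
    Set.preimage_image_eq _ OnePoint.coe_injective
  rw [h2] at h
  rw [← h]
  rfl

theorem infty_mem_sphFrontier {n : ℕ} {D : Set (Euc n)} (hD : ¬ Bornology.IsBounded D) :
    (OnePoint.infty : OnePoint (Euc n)) ∈ sphFrontier D := by
  refine ⟨?_, fun h => ?_⟩
  · by_contra hcl
    have ho := (isClosed_closure (s := (fun x : Euc n => (x : OnePoint (Euc n))) '' D)).isOpen_compl
    rw [OnePoint.isOpen_iff_of_mem (by simpa using hcl)] at ho
    refine hD (ho.2.isBounded.subset fun x hx => ?_)
    simp only [Set.preimage_compl, compl_compl, Set.mem_preimage]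
    exact subset_closure ⟨x, hx, rfl⟩
  · obtain ⟨x, -, hx⟩ := interior_subset h
    exact OnePoint.coe_ne_infty x hx

/-- A point of the compact set `closure D` farthest from `p` lies on the boundary, because a point
of the open set `D` can be pushed away from `p` inside `D`. -/
theorem exists_frontier_far {n : ℕ} {D : Set (Euc n)} (hD : IsOpen D)
    (hb : Bornology.IsBounded D) {p x : Euc n} (hp : p ∈ frontier D) (hx : x ∈ D) :
    ∃ a ∈ frontier D, dist p x ≤ dist p a := by
  have hc : IsCompact (closure D) := hb.isCompact_closure
  obtain ⟨a, ha, hmax⟩ := hc.exists_isMaxOn ⟨x, subset_closure hx⟩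
    (f := fun y => dist p y) (by fun_prop)
  refine ⟨a, ?_, hmax (subset_closure hx)⟩
  rw [hD.frontier_eq] at hp ⊢
  refine ⟨ha, fun haD => ?_⟩
  have hap : a ≠ p := fun h => hp.2 (h ▸ haD)
  have hev : ∀ᶠ ε : ℝ in 𝓝[>] 0, a + ε • (a - p) ∈ D := by
    have : Tendsto (fun ε : ℝ => a + ε • (a - p)) (𝓝[>] 0) (𝓝 a) := by
      have h : Continuous (fun ε : ℝ => a + ε • (a - p)) := by fun_prop
      simpa using (h.tendsto 0).mono_left nhdsWithin_le_nhds
    exact this.eventually (hD.mem_nhds haD)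
  obtain ⟨ε, hε, hε0⟩ := (hev.and self_mem_nhdsWithin).exists
  have hε0 : 0 < ε := hε0
  have h1 : dist p (a + ε • (a - p)) ≤ dist p a := hmax (subset_closure hε)
  have h2 : dist p (a + ε • (a - p)) = (1 + ε) * dist p a := by
    rw [dist_comm p, dist_comm p, dist_eq_norm, dist_eq_norm,
      show a + ε • (a - p) - p = (1 + ε) • (a - p) by module, norm_smul,
      Real.norm_of_nonneg (by linarith)]
  have h3 : 0 < dist p a := dist_pos.2 hap.symm
  nlinarith

/-- Uniform perfectness of the spherical boundary, expressed through the Euclidean boundary. -/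
theorem sphPerfectEuc.exists_frontier {n : ℕ} {C : ℝ} {D : Set (Euc n)}
    (hperf : sphPerfectEuc D C) {p : Euc n} (hp : p ∈ frontier D) {r : ℝ} (hr : 0 < r)
    (h : ¬ Bornology.IsBounded D ∨ ∃ b ∈ frontier D, r ≤ dist p b) :
    ∃ a ∈ frontier D, dist p a < r ∧ r / C ≤ dist p a := by
  obtain ⟨w, hw, h'⟩ := hperf p (coe_mem_sphFrontier.2 hp) r hr (by
    rcases h with h | ⟨b, hb, hrb⟩
    · exact ⟨_, infty_mem_sphFrontier h, fun w' hw' => (OnePoint.infty_ne_coe w' hw').elim⟩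
    · refine ⟨b, coe_mem_sphFrontier.2 hb, fun w' hw' => ?_⟩
      rwa [← OnePoint.coe_injective hw'])
  exact ⟨w, coe_mem_sphFrontier.1 hw, h'⟩

theorem sphPerfectEuc.exists_frontier_of_mem {n : ℕ} {C : ℝ} {D : Set (Euc n)}
    (hperf : sphPerfectEuc D C) (hD : IsOpen D) {p x : Euc n} (hp : p ∈ frontier D)
    (hx : x ∈ D) (hpx : 0 < dist p x) :
    ∃ a ∈ frontier D, dist p a < dist p x ∧ dist p x / C ≤ dist p a := by
  refine hperf.exists_frontier hp hpx ?_
  by_cases hb : Bornology.IsBounded D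
  · exact Or.inr (exists_frontier_far hD hb hp hx)
  · exact Or.inl hb

/-- Quasisymmetry centred at a boundary point `z` controls `|z - f x|` by `|z - x|`. -/
theorem dist_image_nearest_le {n : ℕ} {C : ℝ} (hC : 1 < C) {η : ℝ → ℝ} (hη : 0 ≤ η C)
    {D : Set (Euc n)} (hD : IsOpen D) (hperf : sphPerfectEuc D C) {f : Euc n → Euc n}
    (hqs : QSWith dist dist (closure D) f η) (hid : Set.EqOn f id (frontier D))
    {x z : Euc n} (hx : x ∈ D) (hz : z ∈ frontier D) (hzx : 0 < dist z x) :
    dist z (f x) ≤ η C * dist z x := by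
  obtain ⟨a, ha, ha1, ha2⟩ := hperf.exists_frontier_of_mem hD hz hx hzx
  have hC0 : 0 < C := by linarith
  have h := hqs C hC0 z (frontier_subset_closure hz) x (subset_closure hx) a
    (frontier_subset_closure ha) (by rw [div_le_iff₀ hC0] at ha2; linarith)
  rw [hid hz, hid ha] at h
  exact h.trans (mul_le_mul_of_nonneg_left ha1.le hη)

/-- For a boundary point `u`, the distance `|u - x|` is controlled by `|u - f x|`. -/
theorem dist_nearest_image_le {n : ℕ} {C : ℝ} (hC : 1 < C) {η : ℝ → ℝ} (hηC : η 1 ≤ η C)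
    {D : Set (Euc n)} (hD : IsOpen D) (hperf : sphPerfectEuc D C)
    {f : Euc n → Euc n} (hqs : QSWith dist dist (closure D) f η)
    (hid : Set.EqOn f id (frontier D))
    {x u : Euc n} (hx : x ∈ D) (hu : u ∈ frontier D) (hux : 0 < dist u x) :
    dist u x ≤ 2 * (1 + η C) * dist u (f x) := by
  have hC0 : 0 < C := by linarith
  have hnn : 0 ≤ dist u (f x) := dist_nonneg
  rcases lt_or_ge C 2 with h2 | h2
  · obtain ⟨a, ha, ha1, ha2⟩ := hperf.exists_frontier_of_mem hD hu hx hux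
    have h := hqs 1 one_pos u (frontier_subset_closure hu) a (frontier_subset_closure ha) x
      (subset_closure hx) (by linarith)
    rw [hid hu, hid ha] at h
    simp only [id] at h
    rw [div_le_iff₀ hC0] at ha2
    have h3 : dist u a * C ≤ dist u a * 2 := mul_le_mul_of_nonneg_left h2.le dist_nonneg
    have h4 : η 1 * dist u (f x) ≤ η C * dist u (f x) := mul_le_mul_of_nonneg_right hηC hnn
    linarith
  · -- If `D` is bounded and `∂D` lies within `(C - 1) s` of `u`, where `s = |u - x|`, a boundary
    -- point at least as far from `u` as `x` serves as `a`; otherwise uniform perfectness applies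
    -- at the radius `(C - 1) s`, and `(C - 1) / C ≥ 1 / 2`.
    obtain ⟨a, ha, ha1, ha2⟩ : ∃ a ∈ frontier D,
        dist u a ≤ (C - 1) * dist u x ∧ dist u x / 2 ≤ dist u a := by
      by_cases h : ¬ Bornology.IsBounded D ∨ ∃ b ∈ frontier D, (C - 1) * dist u x ≤ dist u b
      · obtain ⟨a, ha, ha1, ha2⟩ := hperf.exists_frontier hu
          (mul_pos (by linarith : 0 < C - 1) hux) h
        refine ⟨a, ha, ha1.le, ?_⟩
        rw [div_le_iff₀ hC0] at ha2
        rw [div_le_iff₀ two_pos]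
        by_contra! hlt
        nlinarith [mul_nonneg (by linarith : 0 ≤ C - 2) hux.le]
      · push Not at h
        obtain ⟨a, ha, ha1⟩ := exists_frontier_far hD h.1 hu hx
        exact ⟨a, ha, (h.2 a ha).le, by linarith⟩
    have h := hqs C hC0 x (subset_closure hx) a (frontier_subset_closure ha) u
      (frontier_subset_closure hu) (by
        have := dist_triangle x u a
        rw [dist_comm x u] at this ⊢
        linarith)
    rw [hid hu, hid ha] at h
    simp only [id] at h
    have h3 := dist_triangle u (f x) a
    rw [dist_comm (f x) u] at h
    linarith

/-- Let `D ⊊ ℝⁿ` be a domain whose boundary (taken in the Riemann sphere)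
is `C`-uniformly perfect with respect to the Euclidean metric, let `η : [0,∞) → [0,∞)` be a
homeomorphism, and let `f : cl(D) → cl(D)` be an `η`-quasisymmetric homeomorphism with `f`
equal to the identity on `∂D`.  Then `j_D(x, f(x)) ≤ 2 log(1 + 4η(C))` for all `x ∈ D`. -/
theorem stmt1 (n : ℕ) (C : ℝ) (hC : 1 < C) (η : ℝ → ℝ) (hη : CtrlFun η)
    (D : Set (Euc n)) (hD : IsOpen D) (hconn : IsConnected D) (hne : D ≠ Set.univ)
    (hperf : sphPerfectEuc D C)
    (f : Euc n → Euc n) (hf : HomeoOn f (closure D))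
    (hqs : QSWith dist dist (closure D) f η)
    (hid : Set.EqOn f id (frontier D)) :
    ∀ x ∈ D, jDist D x (f x) ≤ 2 * Real.log (1 + 4 * η C) := by
  intro x hx
  have hfr : ∀ {p}, p ∈ D → p ∉ frontier D := fun hp h => by
    rw [hD.frontier_eq] at h; exact h.2 hp
  have hxc : x ∈ closure D := subset_closure hx
  have hy : f x ∈ D := by
    by_contra hn
    have hyf : f x ∈ frontier D := by
      rw [hD.frontier_eq]; exact ⟨hf.1.mapsTo hxc, hn⟩
    have := hf.1.injOn (frontier_subset_closure hyf) hxc (hid hyf)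
    rw [this] at hn
    exact hn hx
  have hFne : (frontier D).Nonempty := by
    rw [Set.nonempty_iff_ne_empty]
    intro h
    rcases isClopen_iff.1 (isClopen_iff_frontier_eq_empty.2 h) with h | h
    · exact hconn.nonempty.ne_empty h
    · exact hne h
  obtain ⟨z, hz, hzd⟩ := isClosed_frontier.exists_infDist_eq_dist hFne x
  obtain ⟨u, hu, hud⟩ := isClosed_frontier.exists_infDist_eq_dist hFne (f x)
  have hpos : ∀ {p q}, p ∈ frontier D → q ∈ D → 0 < dist p q := fun hp hq =>
    dist_pos.2 fun h => hfr hq (h ▸ hp)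
  have hη1 : 1 ≤ η 1 := by
    have h := hqs 1 one_pos x hxc z (frontier_subset_closure hz) z
      (frontier_subset_closure hz) (by simp)
    rw [hid hz] at h
    have h0 := hpos hz hy
    rw [dist_comm] at h0
    exact le_of_mul_le_mul_right (by simpa using h) h0
  have hηC : η 1 ≤ η C :=
    (hη.mono (Set.mem_Ici.2 zero_le_one) (Set.mem_Ici.2 (by linarith)) hC).le
  have h1 := dist_image_nearest_le hC (by linarith) hD hperf hqs hid hx hz (hpos hz hx)
  have h2 := dist_nearest_image_le hC hηC hD hperf hqs hid hx hu (hpos hu hx)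
  have hdx : bdist D x = dist z x := by rw [bdist, hzd, dist_comm]
  have hdy : bdist D (f x) = dist u (f x) := by rw [bdist, hud, dist_comm]
  have hxz := hpos hz hx
  have hyu := hpos hu hy
  have hmain : dist x (f x) / min (dist z x) (dist u (f x)) ≤ 3 + 2 * η C := by
    have t1 := dist_triangle_left x (f x) z
    have t2 := dist_triangle_left x (f x) u
    rw [div_le_iff₀ (lt_min hxz hyu)]
    rcases min_choice (dist z x) (dist u (f x)) with h | h <;> rw [h]
    · nlinarith
    · nlinarith
  have h0 : 0 ≤ dist x (f x) / min (dist z x) (dist u (f x)) :=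
    div_nonneg dist_nonneg (lt_min hxz hyu).le
  rw [jDist, hdx, hdy, ← Real.log_rpow (by linarith)]
  refine Real.log_le_log (by linarith) ?_
  rw [Real.rpow_two]
  nlinarith

end
end

section
/- Let o = (0,0), D = B(o,1) \ {o} ⊂ ℝ², x_m = (1/m, 0) for m ≥ 3, and f : ℝ² → ℝ² defined by f(x) = |x| x. Then f maps cl(D) onto itself with f equal to the identity on ∂D = {o} ∪ {|x| = 1}, and j_D(x_m, f(x_m)) = log m, so j_D(x_m, f(x_m)) → ∞ as m → ∞. -/
/-!
The closure of the punctured disk is the closed disk and its frontier is the puncture together with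
the unit circle. Since `|f(x)| = |x|²`, the radial map acts on each ray as `t ↦ t²`, which is a
bijection of `[0, 1]` fixing exactly `0` and `1`; this gives the assertions on `cl(D)` and `∂D`.

Within distance `1/2` of the origin the puncture is the nearest boundary point, so the distance to
the boundary is `|x|` (`bdist_D4`). Both `x_m` and `f(x_m) = x_m / m` lie there for `m ≥ 3`, with
boundary distances `1/m` and `1/m²`, and they are `(1 - 1/m) / m` apart. The ratio in `j_D` is then
`m - 1`, so that `j_D(x_m, f(x_m)) = log m` (`jDist_x4`).
-/

open Metric Filter Set Topology

noncomputable section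

/-- The punctured disk `B(o,1) \ {o} ⊆ ℝ²`. -/
def D4 : Set (Euc 2) := Metric.ball (0 : Euc 2) 1 \ {0}

/-- The point `x_m = (1/m, 0)`. -/
def x4 (m : ℕ) : Euc 2 := ((m : ℝ))⁻¹ • EuclideanSpace.single (0 : Fin 2) (1 : ℝ)

/-- The radial map `f(x) = |x| x`. -/
def f4 : Euc 2 → Euc 2 := fun x => ‖x‖ • x

/-- Deleting the centre does not change the closure, since a point of the plane is not isolated. -/
lemma closure_D4 : closure D4 = Metric.closedBall (0 : Euc 2) 1 := by
  rw [← closure_ball (0 : Euc 2) one_ne_zero]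
  refine Subset.antisymm (closure_mono sdiff_subset) (closure_minimal ?_ isClosed_closure)
  have h := (dense_compl_singleton (0 : Euc 2)).open_subset_closure_inter
    (Metric.isOpen_ball (x := (0 : Euc 2)) (ε := 1))
  rwa [← sdiff_eq] at h

lemma frontier_D4 : frontier D4 = {0} ∪ Metric.sphere (0 : Euc 2) 1 := by
  have ho : IsOpen D4 := Metric.isOpen_ball.sdiff isClosed_singleton
  rw [ho.frontier_eq, closure_D4]
  ext x
  by_cases hx : x = 0
  · simp [D4, hx]
  · simp [D4, hx, le_antisymm_iff]

lemma norm_f4 (x : Euc 2) : ‖f4 x‖ = ‖x‖ ^ 2 := by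
  simp [f4, norm_smul, sq]

lemma bijOn_f4 : Set.BijOn f4 (Metric.closedBall 0 1) (Metric.closedBall 0 1) := by
  refine ⟨fun x hx => ?_, fun x _ y _ h => ?_, fun y hy => ?_⟩
  · rw [mem_closedBall_zero_iff] at hx ⊢
    rw [norm_f4]
    exact pow_le_one₀ (norm_nonneg _) hx
  · have hn : ‖x‖ = ‖y‖ := by
      have h2 := congrArg norm h
      rw [norm_f4, norm_f4] at h2
      exact (sq_eq_sq₀ (norm_nonneg _) (norm_nonneg _)).1 h2
    by_cases hx : x = 0
    · rw [hx, norm_zero, eq_comm, norm_eq_zero] at hn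
      rw [hx, hn]
    · simp only [f4, ← hn] at h
      exact smul_right_injective _ (norm_ne_zero_iff.2 hx) h
  -- The preimage of `y` is `|y|^(-1/2) y`; at `y = 0` the convention `0⁻¹ = 0` is harmless.
  · have hx : ‖(√‖y‖)⁻¹ • y‖ = √‖y‖ := by
      rw [norm_smul, norm_inv, Real.norm_of_nonneg (Real.sqrt_nonneg _), inv_mul_eq_div,
        Real.div_sqrt]
    refine ⟨(√‖y‖)⁻¹ • y, ?_, ?_⟩
    · rw [mem_closedBall_zero_iff] at hy ⊢
      rw [hx]
      exact Real.sqrt_le_one.2 hy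
    · by_cases h0 : y = 0
      · simp [h0, f4]
      · have : √‖y‖ ≠ 0 := (Real.sqrt_pos.2 (norm_pos_iff.2 h0)).ne'
        simp only [f4]
        rw [hx, smul_smul, mul_inv_cancel₀ this, one_smul]

/-- In the inner half of the disk the puncture is the nearest boundary point. -/
lemma bdist_D4 {x : Euc 2} (hx : ‖x‖ ≤ 1 / 2) : bdist D4 x = ‖x‖ := by
  rw [bdist, frontier_D4]
  apply le_antisymm
  · simpa using Metric.infDist_le_dist_of_mem (x := x)
      (show (0 : Euc 2) ∈ {0} ∪ Metric.sphere (0 : Euc 2) 1 by simp)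
  · refine (Metric.le_infDist ⟨0, by simp⟩).2 ?_
    rintro y (rfl | hy)
    · simp
    · rw [mem_sphere_zero_iff_norm] at hy
      have := norm_sub_norm_le y x
      rw [dist_eq_norm, norm_sub_rev]
      linarith

lemma norm_x4 (m : ℕ) : ‖x4 m‖ = (m : ℝ)⁻¹ := by
  simp [x4, norm_smul]

lemma jDist_x4 (m : ℕ) (hm : 3 ≤ m) : jDist D4 (x4 m) (f4 (x4 m)) = Real.log m := by
  have hm' : (3 : ℝ) ≤ m := by exact_mod_cast hm
  have hpos : (0 : ℝ) < m := by linarith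
  have hi : (m : ℝ)⁻¹ ≤ 1 / 2 := by
    rw [inv_le_comm₀ hpos (by norm_num)]
    linarith
  have hi0 : 0 < (m : ℝ)⁻¹ := inv_pos.2 hpos
  have hsq : ((m : ℝ)⁻¹) ^ 2 ≤ (m : ℝ)⁻¹ := by nlinarith
  have hd : dist (x4 m) (f4 (x4 m)) = (1 - (m : ℝ)⁻¹) * (m : ℝ)⁻¹ := by
    have : x4 m - f4 (x4 m) = (1 - (m : ℝ)⁻¹) • x4 m := by
      rw [f4, norm_x4, sub_smul, one_smul]
    rw [dist_eq_norm, this, norm_smul, norm_x4, Real.norm_of_nonneg (by linarith)]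
  rw [jDist, bdist_D4 (by rwa [norm_x4]), bdist_D4 (by rw [norm_f4, norm_x4]; linarith),
    norm_f4, norm_x4, min_eq_right hsq, hd]
  congr 1
  field_simp
  ring

/-- With `o = (0,0)`, `D = B(o,1) \ {o} ⊆ ℝ²`, `x_m = (1/m, 0)` and
`f(x) = |x| x`: the map `f` maps `cl(D)` onto itself, `f` is the identity on
`∂D = {o} ∪ {|x| = 1}`, `j_D(x_m, f(x_m)) = log m` for `m ≥ 3`, and hence
`j_D(x_m, f(x_m)) → ∞` as `m → ∞`. -/
theorem stmt4 :
    frontier D4 = {0} ∪ Metric.sphere (0 : Euc 2) 1 ∧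
    Set.BijOn f4 (closure D4) (closure D4) ∧
    Set.EqOn f4 id (frontier D4) ∧
    (∀ m : ℕ, 3 ≤ m → jDist D4 (x4 m) (f4 (x4 m)) = Real.log m) ∧
    Filter.Tendsto (fun m : ℕ => jDist D4 (x4 m) (f4 (x4 m))) Filter.atTop Filter.atTop := by
  refine ⟨frontier_D4, ?_, ?_, jDist_x4, ?_⟩
  · rw [closure_D4]
    exact bijOn_f4
  · rw [frontier_D4]
    rintro x (rfl | hx)
    · simp [f4]
    · rw [mem_sphere_zero_iff_norm] at hx
      simp [f4, hx]
  · refine (Real.tendsto_log_atTop.comp tendsto_natCast_atTop_atTop).congr' ?_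
    filter_upwards [eventually_ge_atTop 3] with m hm
    exact (jDist_x4 m hm).symm

end
end

section
/- Let Z = {(0,0,z) : z ∈ ℝ}, D = ℝ³ \ Z, and let f : ℝ³ → ℝ³ be the rotation around the line Z by angle π (so f(e₁) = −e₁ for e₁ = (1,0,0), and f keeps Z pointwise fixed). Then f is an isometry of ℝ³ mapping D onto D, f is the identity on ∂D, and j_D(x, f(x)) = log 3 for all x ∈ D. -/
/-!
The map `f5` is an isometric involution whose fixed point set is exactly the axis `Zaxis`.
For `z` on the axis, `dist x (f5 x) ≤ dist x z + dist z (f5 x) = 2 * dist x z`, because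
`dist z (f5 x) = dist (f5 z) (f5 x) = dist z x`. Equality is attained at the midpoint of `x` and
`f5 x`, which lies on the axis. Hence `infDist x Zaxis = dist x (f5 x) / 2`
(`infDist_Zaxis`), and the same value is found at `f5 x` since `f5 (f5 x) = x`. As the axis is
closed with empty interior, it is the boundary of `D5`, so the quotient in `jDist` is `2` off the
axis.
-/

open Metric Filter Set Topology

noncomputable section

/-- The `z`-axis `Z = {(0,0,z) : z ∈ ℝ} ⊆ ℝ³`. -/
def Zaxis : Set (Euc 3) := {x : Euc 3 | x 0 = 0 ∧ x 1 = 0}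

/-- The domain `D = ℝ³ \ Z`. -/
def D5 : Set (Euc 3) := Zaxisᶜ

/-- Rotation by angle `π` around the `z`-axis. -/
def f5 : Euc 3 → Euc 3 := fun x =>
  (WithLp.equiv 2 (Fin 3 → ℝ)).symm ![-(x 0), -(x 1), x 2]

@[simp] lemma f5_apply_zero (x : Euc 3) : f5 x 0 = -x 0 := rfl

@[simp] lemma f5_apply_one (x : Euc 3) : f5 x 1 = -x 1 := rfl

@[simp] lemma f5_apply_two (x : Euc 3) : f5 x 2 = x 2 := rfl

lemma f5_f5 (x : Euc 3) : f5 (f5 x) = x := by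
  ext i
  fin_cases i <;> simp

lemma f5_eq_self_iff (x : Euc 3) : f5 x = x ↔ x ∈ Zaxis := by
  constructor
  · intro h
    have h0 : -x 0 = x 0 := by rw [← f5_apply_zero, h]
    have h1 : -x 1 = x 1 := by rw [← f5_apply_one, h]
    exact ⟨by linarith, by linarith⟩
  · rintro ⟨h0, h1⟩
    ext i
    fin_cases i <;> simp [h0, h1]

lemma isometry_f5 : Isometry f5 := by
  refine Isometry.of_dist_eq fun x y => ?_
  rw [EuclideanSpace.dist_eq, EuclideanSpace.dist_eq]
  simp only [Fin.sum_univ_three, f5_apply_zero, f5_apply_one, f5_apply_two, dist_neg_neg]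

lemma f5_mem_D5 {x : Euc 3} (hx : x ∈ D5) : f5 x ∈ D5 :=
  fun h => hx ⟨neg_eq_zero.mp h.1, neg_eq_zero.mp h.2⟩

lemma isClosed_Zaxis : IsClosed Zaxis :=
  (isClosed_eq (by fun_prop) continuous_const).inter (isClosed_eq (by fun_prop) continuous_const)

lemma frontier_D5 : frontier D5 = Zaxis := by
  have hdense : Dense D5 := by
    intro x
    by_cases hx : x ∈ D5
    · exact subset_closure hx
    obtain ⟨h0, -⟩ : x ∈ Zaxis := not_not.mp hx
    -- A point of the axis is a limit of its translates in the direction `e₁`.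
    rw [Metric.mem_closure_iff]
    intro ε hε
    refine ⟨x + EuclideanSpace.single 0 (ε / 2), fun h => ?_, ?_⟩
    · have h' : x 0 + ε / 2 = 0 := by simpa using h.1
      linarith
    · simp [abs_of_pos hε, hε]
  rw [D5, frontier_compl, isClosed_Zaxis.frontier_eq,
    interior_eq_empty_iff_dense_compl.mpr hdense, sdiff_empty]

/-- The distance to the axis is half the displacement under the half-turn: the lower bound is
the triangle inequality through a fixed point, and the midpoint of `x` and `f5 x` attains it. -/
lemma infDist_Zaxis (x : Euc 3) : infDist x Zaxis = dist x (f5 x) / 2 := by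
  have hmid : midpoint ℝ x (f5 x) ∈ Zaxis := by
    constructor <;> simp [midpoint_eq_smul_add]
  apply le_antisymm
  · refine (infDist_le_dist_of_mem hmid).trans_eq ?_
    rw [dist_left_midpoint, Real.norm_ofNat]
    ring
  · refine (le_infDist ⟨_, hmid⟩).mpr fun z hz => ?_
    have h1 := dist_triangle x z (f5 x)
    have h2 : dist z (f5 x) = dist x z := by
      rw [dist_comm x z, ← isometry_f5.dist_eq z x, (f5_eq_self_iff z).mpr hz]
    linarith

lemma jDist_f5 {x : Euc 3} (hx : x ∈ D5) : jDist D5 x (f5 x) = Real.log 3 := by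
  have hpos : 0 < dist x (f5 x) :=
    dist_pos.mpr fun h => hx ((f5_eq_self_iff x).mp h.symm)
  rw [jDist, bdist, bdist, frontier_D5, infDist_Zaxis, infDist_Zaxis, f5_f5,
    dist_comm (f5 x) x, min_self]
  congr 1
  field_simp
  norm_num

/-- Let `Z` be the `z`-axis, `D = ℝ³ \ Z`, and let `f` be the rotation by
angle `π` around `Z` (so `f(e₁) = −e₁` and `f` fixes `Z` pointwise).  Then `f` is an
isometry of `ℝ³` mapping `D` onto `D`, `f` is the identity on `∂D = Z`, and
`j_D(x, f(x)) = log 3` for all `x ∈ D`. -/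
theorem stmt5 :
    f5 (EuclideanSpace.single (0 : Fin 3) (1 : ℝ)) =
      -(EuclideanSpace.single (0 : Fin 3) (1 : ℝ)) ∧
    (∀ z ∈ Zaxis, f5 z = z) ∧
    Isometry f5 ∧
    Set.BijOn f5 D5 D5 ∧
    frontier D5 = Zaxis ∧
    Set.EqOn f5 id (frontier D5) ∧
    ∀ x ∈ D5, jDist D5 x (f5 x) = Real.log 3 := by
  refine ⟨?_, fun z hz => (f5_eq_self_iff z).mpr hz, isometry_f5, ?_, frontier_D5, ?_,
    fun x hx => jDist_f5 hx⟩
  · ext i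
    fin_cases i <;> simp
  · exact ⟨fun x hx => f5_mem_D5 hx, isometry_f5.injective.injOn,
      fun x hx => ⟨f5 x, f5_mem_D5 hx, f5_f5 x⟩⟩
  · rw [frontier_D5]
    exact fun z hz => (f5_eq_self_iff z).mpr hz

end
end

section
/- Let Z be a compact C-uniformly perfect metric space containing at least two points. Then there exist three distinct points ξ₁, ξ₂, ξ₃ ∈ Z such that d(ξ_i, ξ_j) ≥ diam(Z)/(2C) for all i ≠ j ∈ {1,2,3}. -/
/-!
The diameter `δ` of the compact space `Z` is attained at some pair `x, y`, and `δ > 0`. Uniform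
perfectness at `x` with radius `δ / 2` gives `z` with `δ / (2C) ≤ dist x z < δ / 2`, and then
`dist y z > δ / 2` by the triangle inequality, so `x, y, z` is the required triple.
-/

open Metric Filter Set Topology

noncomputable section

/-- separated triples in uniformly perfect compact spaces.
Let `Z` be a compact `C`-uniformly perfect metric space containing at least two points.
Then there exist three distinct points `ξ₁, ξ₂, ξ₃ ∈ Z` with
`d(ξ_i, ξ_j) ≥ diam(Z)/(2C)` for all `i ≠ j`. -/
theorem stmt17 {Z : Type*} [MetricSpace Z] [CompactSpace Z] (C : ℝ) (hC : 1 < C)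
    (hperf : UnifPerfectWith dist (Set.univ : Set Z) C)
    (hpts : ∃ x y : Z, x ≠ y) :
    ∃ ξ₁ ξ₂ ξ₃ : Z, ξ₁ ≠ ξ₂ ∧ ξ₁ ≠ ξ₃ ∧ ξ₂ ≠ ξ₃ ∧
      Metric.diam (Set.univ : Set Z) / (2 * C) ≤ dist ξ₁ ξ₂ ∧
      Metric.diam (Set.univ : Set Z) / (2 * C) ≤ dist ξ₁ ξ₃ ∧
      Metric.diam (Set.univ : Set Z) / (2 * C) ≤ dist ξ₂ ξ₃ := by
  obtain ⟨a, b, hab⟩ := hpts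
  -- By compactness the diameter is attained, at a pair `(x, y)`.
  obtain ⟨⟨x, y⟩, -, hmax⟩ := (isCompact_univ (X := Z × Z)).exists_isMaxOn ⟨(a, b), trivial⟩
    (continuous_dist (α := Z)).continuousOn
  have hle : ∀ u v : Z, dist u v ≤ dist x y := fun u v => hmax (mem_univ (u, v))
  have hdiam : Metric.diam (Set.univ : Set Z) = dist x y :=
    le_antisymm (Metric.diam_le_of_forall_dist_le dist_nonneg fun u _ v _ => hle u v)
      (Metric.dist_le_diam_of_mem isCompact_univ.isBounded (mem_univ x) (mem_univ y))
  have hpos : 0 < dist x y := (dist_pos.2 hab).trans_le (hle a b)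
  obtain ⟨z, -, hz₁, hz₂⟩ := hperf x (mem_univ x) (dist x y / 2) (by linarith)
    ⟨y, mem_univ y, by linarith⟩
  rw [div_div] at hz₂
  have hq : 0 < dist x y / (2 * C) := by positivity
  have hhalf : dist x y / (2 * C) ≤ dist x y / 2 :=
    div_le_div_of_nonneg_left hpos.le two_pos (by linarith)
  have hyz : dist x y / 2 < dist y z := by
    have := dist_triangle x z y
    rw [dist_comm z y] at this
    linarith
  rw [hdiam]
  exact ⟨x, y, z, dist_pos.1 hpos, dist_pos.1 (by linarith), dist_pos.1 (by linarith),
    by linarith, hz₂, by linarith⟩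

end
end

section
/- Let X be a locally compact, rectifiably connected, complete metric space and D ⊊ X a bounded A-uniform domain whose metric boundary ∂D is C-uniformly perfect and satisfies diam(D) ≤ M₁ diam(∂D) for some M₁ ≥ 1. Let η : [0,∞) → [0,∞) be a homeomorphism and g : cl(D) → cl(D) an η-quasisymmetric homeomorphism of the metric completion with g equal to the identity on ∂D. Then there is a constant Λ = Λ(A, C, M₁, η) such that k_D(x, g(x)) ≤ Λ for all x ∈ D; one may take Λ = 4A² log(1 + M₃(M₃+1)) with M₃ = 4η(2M₁C). -/
/-!
The theorem combines a metric comparison with a Gehring–Osgood type estimate.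

*Comparison.* Put `E = η (2M₁C)` and let `d` be the distance to the boundary. The map `g` fixes the
boundary, so quasisymmetry can be tested against boundary points `p, q` with `g p = p`, `g q = q`.
If `p` is almost nearest to `x`, uniform perfectness and `diam D ≤ M₁ diam ∂D` give `q` with
`|p - q| ≤ |p - x| ≤ 2M₁C |p - q|`, hence `|p - g x| ≤ E |p - x|`. If instead `p` is almost nearest
to `g x`, they give `q` with `|p - x| / (4M₁) ≤ |p - q| ≤ 2M₁C |p - x|`, hence
`|p - x| ≤ 4M₁E |p - g x|`. Comparing distances between boundary points alone shows `2M₁ < E`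
(`two_mul_lt_ctrl`), so the last factor is below `2E²`. Either way `|x - g x|` is at most
`4E(4E + 1)` times the smaller of `d(x)` and `d(g x)`.

*Quasihyperbolic estimate.* `mQhDist_le` integrates `1/d` along a uniform curve, in terms of the
arc length `s`. It rests on three facts about Lipschitz curves: the metric speed is a bounded
measurable function (`mSpeed_measurable`), chords are no longer than arcs (`dist_le_mLen`), and
`∫ S' / S` is a difference of logarithms for Lipschitz `S` (`integral_logDeriv`).
-/

open Metric Filter Set Topology

noncomputable section

/-! ### Metric speed and arc length -/

/-- The limsup defining the metric speed of a continuous curve may be taken along rational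
increments, which is what makes the speed measurable. -/
lemma mSpeed_eq_rat {X : Type*} [MetricSpace X] {γ : ℝ → X} (hγ : Continuous γ) (t : ℝ) :
    mSpeed γ t = Filter.limsup (fun q : ℚ => dist (γ (t + q)) (γ t) / |(q : ℝ)|)
      (Filter.comap (fun q : ℚ => (q : ℝ)) (𝓝[≠] (0:ℝ))) := by
  unfold mSpeed
  rw [Filter.limsup_eq, Filter.limsup_eq]
  congr 1
  ext a
  change (∀ᶠ h in 𝓝[≠] (0:ℝ), dist (γ (t + h)) (γ t) / |h| ≤ a) ↔ ∀ᶠ q : ℚ in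
    Filter.comap (fun q : ℚ => (q : ℝ)) (𝓝[≠] (0:ℝ)), dist (γ (t + q)) (γ t) / |(q : ℝ)| ≤ a
  constructor
  · intro h
    exact h.comap _
  · intro h
    rw [Filter.eventually_comap] at h
    have h1 : ∀ᶠ y in 𝓝[≠] (0:ℝ), ∀ᶠ z in 𝓝 y, ∀ q : ℚ, (q : ℝ) = z →
        dist (γ (t + q)) (γ t) / |(q : ℝ)| ≤ a := by
      rw [eventually_nhdsWithin_iff] at h ⊢
      filter_upwards [h.eventually_nhds] with y hy hy0
      filter_upwards [hy, isOpen_ne.mem_nhds hy0] with z hz hz0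
      exact hz hz0
    filter_upwards [h1, self_mem_nhdsWithin] with y hy hy0
    have hcont : ContinuousAt (fun z : ℝ => dist (γ (t + z)) (γ t) / |z|) y := by
      apply ContinuousAt.div
      · fun_prop
      · fun_prop
      · exact abs_ne_zero.mpr hy0
    by_contra hlt
    rw [not_le] at hlt
    have h2 := (hcont.eventually (lt_mem_nhds hlt)).and hy
    obtain ⟨_, ⟨q, rfl⟩, hz⟩ := Rat.isDenseEmbedding_coe_real.dense.inter_nhds_nonempty h2
    exact absurd (hz.2 q rfl) (not_le.mpr hz.1)

lemma mSpeed_measurable {X : Type*} [MetricSpace X] {γ : ℝ → X} (hγ : Continuous γ) :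
    Measurable (mSpeed γ) := by
  have h : mSpeed γ = fun t => Filter.limsup (fun q : ℚ => dist (γ (t + q)) (γ t) / |(q : ℝ)|)
      (Filter.comap (fun q : ℚ => (q : ℝ)) (𝓝[≠] (0:ℝ))) := funext (mSpeed_eq_rat hγ)
  rw [h]
  obtain ⟨s, hs⟩ := (Filter.comap (fun q : ℚ => (q : ℝ)) (𝓝[≠] (0:ℝ))).exists_antitone_basis
  refine Measurable.limsup' (p := fun _ : ℕ => True) (s := s) (fun q => ?_)
    ⟨hs.toHasBasis, Set.to_countable _⟩ (fun _ => Set.to_countable _)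
  have : Continuous fun t : ℝ => dist (γ (t + q)) (γ t) / |(q : ℝ)| := by fun_prop
  exact this.measurable

lemma mSpeed_nonneg {X : Type*} [MetricSpace X] (γ : ℝ → X) (t : ℝ) : 0 ≤ mSpeed γ t := by
  unfold mSpeed
  rw [Filter.limsup_eq]
  apply Real.sInf_nonneg
  intro a (ha : ∀ᶠ h in 𝓝[≠] (0:ℝ), dist (γ (t + h)) (γ t) / |h| ≤ a)
  obtain ⟨h, hh⟩ := ha.exists
  exact le_trans (by positivity) hh

lemma eventually_quotient_le {X : Type*} [MetricSpace X] {γ : ℝ → X} {K : NNReal}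
    (hγ : LipschitzWith K γ) (t : ℝ) :
    ∀ᶠ h in 𝓝[≠] (0:ℝ), dist (γ (t + h)) (γ t) / |h| ≤ K := by
  filter_upwards [self_mem_nhdsWithin] with h hh
  rw [div_le_iff₀ (abs_pos.mpr hh)]
  simpa [Real.dist_eq] using hγ.dist_le_mul (t + h) t

lemma mSpeed_le {X : Type*} [MetricSpace X] {γ : ℝ → X} {K : NNReal}
    (hγ : LipschitzWith K γ) (t : ℝ) : mSpeed γ t ≤ K := by
  unfold mSpeed
  rw [Filter.limsup_eq]
  refine csInf_le ⟨0, ?_⟩ (eventually_quotient_le hγ t)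
  intro a (ha : ∀ᶠ h in 𝓝[≠] (0:ℝ), dist (γ (t + h)) (γ t) / |h| ≤ a)
  obtain ⟨h, hh⟩ := ha.exists
  exact le_trans (by positivity) hh

open MeasureTheory in
lemma mSpeed_intervalIntegrable {X : Type*} [MetricSpace X] {γ : ℝ → X} {K : NNReal}
    (hγ : LipschitzWith K γ) (a b : ℝ) : IntervalIntegrable (mSpeed γ) volume a b := by
  refine (intervalIntegrable_const (c := (K : ℝ))).mono_fun
    (mSpeed_measurable hγ.continuous).aestronglyMeasurable (Filter.Eventually.of_forall fun t => ?_)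
  change ‖mSpeed γ t‖ ≤ ‖(K : ℝ)‖
  rw [Real.norm_of_nonneg (mSpeed_nonneg γ t), Real.norm_of_nonneg K.coe_nonneg]
  exact mSpeed_le hγ t

open MeasureTheory in
/-- The chord is no longer than the arc: the Lipschitz function `t ↦ dist (γ a) (γ t)` is the
integral of its derivative, which the metric speed dominates. -/
lemma dist_le_mLen {X : Type*} [MetricSpace X] {γ : ℝ → X} {K : NNReal}
    (hγ : LipschitzWith K γ) {a b : ℝ} (hab : a ≤ b) : dist (γ a) (γ b) ≤ mLen γ a b := by
  set f : ℝ → ℝ := fun t => dist (γ a) (γ t) with hf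
  have hfl : LipschitzWith K f := by
    refine LipschitzWith.of_dist_le_mul fun s t => ?_
    refine le_trans ?_ (hγ.dist_le_mul s t)
    rw [Real.dist_eq, hf]
    simpa [dist_comm] using abs_dist_sub_le (γ s) (γ t) (γ a)
  have hac : AbsolutelyContinuousOnInterval f a b :=
    hfl.lipschitzOnWith.absolutelyContinuousOnInterval
  have h1 := hac.integral_deriv_eq_sub
  have h2 : f b - f a = dist (γ a) (γ b) := by simp [hf]
  rw [← h2, ← h1]
  unfold mLen
  refine intervalIntegral.integral_mono_ae hab hac.intervalIntegrable_deriv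
    (mSpeed_intervalIntegrable hγ a b) ?_
  filter_upwards [hfl.ae_differentiableAt_real] with t ht
  unfold mSpeed
  rw [Filter.limsup_eq]
  refine le_csInf ⟨K, eventually_quotient_le hγ t⟩ fun c hc => ?_
  have h3 := (hasDerivAt_iff_tendsto_slope_zero.mp ht.hasDerivAt)
  refine le_of_tendsto h3 ?_
  filter_upwards [hc, self_mem_nhdsWithin] with h hh hh0
  refine le_trans ?_ hh
  have h4 : |f (t + h) - f t| ≤ dist (γ (t + h)) (γ t) := by
    simpa [hf, dist_comm] using abs_dist_sub_le (γ (t + h)) (γ t) (γ a)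
  calc h⁻¹ • (f (t + h) - f t) ≤ |h⁻¹ • (f (t + h) - f t)| := le_abs_self _
    _ = |f (t + h) - f t| / |h| := by rw [smul_eq_mul, abs_mul, abs_inv]; ring
    _ ≤ _ := by gcongr

/-! ### The quasihyperbolic estimate -/

open MeasureTheory in
/-- Logarithmic integral of a Lipschitz function bounded away from `0`. -/
lemma integral_logDeriv {S v : ℝ → ℝ} {L : NNReal} {a b c : ℝ} (hab : a ≤ b) (hc : 0 < c)
    (hS : LipschitzWith L S) (hpos : ∀ t ∈ Set.Icc a b, c ≤ S t)
    (hder : ∀ᵐ t, t ∈ Set.Icc a b → HasDerivAt S (v t) t) :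
    ∫ t in a..b, v t / S t = Real.log (S b) - Real.log (S a) := by
  have hlip : LipschitzOnWith (Real.toNNReal (1 / c) * L) (fun t => Real.log (S t))
      (Set.uIcc a b) := by
    rw [Set.uIcc_of_le hab]
    refine LipschitzOnWith.of_dist_le_mul fun s hs t ht => ?_
    have key : ∀ x y : ℝ, c ≤ x → c ≤ y → Real.log x - Real.log y ≤ |x - y| / c := by
      intro x y hx hy
      have hx0 : 0 < x := hc.trans_le hx
      have hy0 : 0 < y := hc.trans_le hy
      rw [← Real.log_div hx0.ne' hy0.ne']
      calc Real.log (x / y) ≤ x / y - 1 := Real.log_le_sub_one_of_pos (by positivity)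
        _ = (x - y) / y := by field_simp
        _ ≤ |x - y| / y := by gcongr; exact le_abs_self _
        _ ≤ |x - y| / c := by gcongr
    have h1 : dist (Real.log (S s)) (Real.log (S t)) ≤ |S s - S t| / c := by
      rw [Real.dist_eq, abs_le']
      refine ⟨key _ _ (hpos s hs) (hpos t ht), ?_⟩
      have := key _ _ (hpos t ht) (hpos s hs)
      rw [abs_sub_comm] at this
      linarith
    have h2 : |S s - S t| ≤ L * dist s t := by
      simpa [Real.dist_eq] using hS.dist_le_mul s t
    refine h1.trans ?_
    rw [NNReal.coe_mul, Real.coe_toNNReal _ (by positivity)]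
    calc |S s - S t| / c ≤ (L * dist s t) / c := by gcongr
      _ = _ := by ring
  rw [← hlip.absolutelyContinuousOnInterval.integral_deriv_eq_sub]
  refine intervalIntegral.integral_congr_ae ?_
  filter_upwards [hder] with t ht ht'
  rw [Set.uIoc_of_le hab] at ht'
  have hmem : t ∈ Set.Icc a b := ⟨ht'.1.le, ht'.2⟩
  exact ((ht hmem).log (hc.trans_le (hpos t hmem)).ne').deriv.symm

open MeasureTheory in
/-- The Gehring–Osgood estimate in a uniform domain. Along a uniform curve both `A d(z) ≥ s` and
`d(z) ≥ m - s` hold, where `s` is the arc length to the nearer endpoint and `m` the smaller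
endpoint distance. Hence `2(A+1) d(z) ≥ m + s(A+1)/A`, and integrating the reciprocal gives
`4A log(1 + A|x-y|/m)`; Bernoulli's inequality pulls `A` out of the logarithm. -/
lemma mQhDist_le {X : Type*} [MetricSpace X] {D : Set X} (hD : IsOpen D)
    (hfr : (frontier D).Nonempty) {A : ℝ} (hA : 1 ≤ A) (hunif : mUniform D A)
    {x y : X} (hx : x ∈ D) (hy : y ∈ D) {m : ℝ} (hm : 0 < m)
    (hmx : m ≤ Metric.infDist x (frontier D)) (hmy : m ≤ Metric.infDist y (frontier D)) :
    mQhDist D x y ≤ 4 * A ^ 2 * Real.log (1 + dist x y / m) := by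
  obtain ⟨γ, ⟨⟨K, hK⟩, h0, h1, hin⟩, hlen, hcig⟩ := hunif x hx y hy
  have hA0 : 0 < A := by linarith
  set d : ℝ → ℝ := fun t => Metric.infDist (γ t) (frontier D) with hd
  set v : ℝ → ℝ := mSpeed γ with hv
  have hvi : ∀ a b, IntervalIntegrable v volume a b := mSpeed_intervalIntegrable hK
  have hv0 : ∀ t, 0 ≤ v t := mSpeed_nonneg γ
  set s : ℝ → ℝ := fun t => mLen γ 0 t with hs
  set l : ℝ := mLen γ 0 1 with hl
  have hs0 : s 0 = 0 := by simp [hs, mLen]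
  have hs1 : s 1 = l := rfl
  have hsub : ∀ a b, s b - s a = ∫ t in a..b, v t := fun a b =>
    intervalIntegral.integral_interval_sub_left (hvi 0 b) (hvi 0 a)
  have hmono : Monotone s := by
    intro a b hab
    have := intervalIntegral.integral_nonneg (μ := volume) hab (fun t _ => hv0 t)
    rw [← hsub] at this
    linarith
  have hslip : LipschitzWith K s := by
    refine LipschitzWith.of_dist_le_mul fun b a => ?_
    rw [Real.dist_eq, Real.dist_eq, hsub]
    refine intervalIntegral.norm_integral_le_of_norm_le_const (f := v) fun t _ => ?_
    rw [Real.norm_of_nonneg (hv0 t)]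
    exact mSpeed_le hK t
  have hsder : ∀ᵐ t, t ∈ Set.Icc (0:ℝ) 1 → HasDerivAt s (v t) t := by
    filter_upwards [(hvi 0 1).ae_hasDerivAt_integral] with t ht ht'
    rw [Set.uIcc_of_le zero_le_one] at ht
    exact ht ht' 0 (by simp)
  have hl2 : ∀ t, mLen γ t 1 = l - s t := fun t => (hsub t 1).symm
  have hdcont : Continuous d := (Metric.continuous_infDist_pt _).comp hK.continuous
  have hdpos : ∀ t ∈ Set.Icc (0:ℝ) 1, 0 < d t := by
    intro t ht
    refine (isClosed_frontier.notMem_iff_infDist_pos hfr).mp fun hmem => ?_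
    rw [hD.frontier_eq] at hmem
    exact hmem.2 (hin t ht)
  have hdx : ∀ t ∈ Set.Icc (0:ℝ) 1, m - s t ≤ d t := by
    intro t ht
    have h2 := dist_le_mLen hK ht.1
    have h3 := Metric.infDist_le_infDist_add_dist (s := frontier D) (x := x) (y := γ t)
    rw [h0] at h2
    simp only [hs, hd]
    linarith
  have hdy : ∀ t ∈ Set.Icc (0:ℝ) 1, m - (l - s t) ≤ d t := by
    intro t ht
    have h2 := dist_le_mLen hK ht.2
    have h3 := Metric.infDist_le_infDist_add_dist (s := frontier D) (x := y) (y := γ t)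
    rw [h1, dist_comm] at h2
    rw [hl2] at h2
    simp only [hd]
    linarith
  -- the midpoint of the curve with respect to arc length
  obtain ⟨t₀, ht₀, hst₀⟩ : ∃ t ∈ Set.Icc (0:ℝ) 1, s t = l / 2 := by
    have hl0 : 0 ≤ l := by rw [← hs1, ← hs0]; exact hmono zero_le_one
    have := intermediate_value_Icc (zero_le_one (α := ℝ)) hslip.continuous.continuousOn
    exact this ⟨by rw [hs0]; linarith, by rw [hs1]; linarith⟩
  have hl0 : 0 ≤ l := by rw [← hs1, ← hs0]; exact hmono zero_le_one
  set κ : ℝ := (A + 1) / A with hκ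
  have hκ0 : 0 < κ := by positivity
  have hκA : κ * A = A + 1 := by rw [hκ]; field_simp
  set S₁ : ℝ → ℝ := fun t => m + κ * s t with hS₁
  set S₂ : ℝ → ℝ := fun t => m + κ * (l - s t) with hS₂
  have hlipκ : ∀ ε : ℝ, ∀ c : ℝ, |ε| = κ → LipschitzWith (Real.toNNReal κ * K)
      (fun t => c + ε * s t) := by
    intro ε c hε
    refine LipschitzWith.of_dist_le_mul fun a b => ?_
    have h2 := hslip.dist_le_mul a b
    rw [NNReal.coe_mul, Real.coe_toNNReal _ hκ0.le, mul_assoc]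
    have h3 : dist (c + ε * s a) (c + ε * s b) = κ * dist (s a) (s b) := by
      rw [Real.dist_eq, Real.dist_eq, ← hε, ← abs_mul]
      congr 1; ring
    rw [h3]
    gcongr
  have hS₁l : LipschitzWith (Real.toNNReal κ * K) S₁ := hlipκ κ m (abs_of_pos hκ0)
  have hS₂l : LipschitzWith (Real.toNNReal κ * K) S₂ := by
    have := hlipκ (-κ) (m + κ * l) (by rw [abs_neg, abs_of_pos hκ0])
    convert! this using 2
    simp only [hS₂]; ring
  have hS₁p : ∀ t ∈ Set.Icc 0 t₀, m ≤ S₁ t := by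
    intro t ht
    have : 0 ≤ s t := by rw [← hs0]; exact hmono ht.1
    simp only [hS₁]; nlinarith
  have hS₂p : ∀ t ∈ Set.Icc t₀ 1, m ≤ S₂ t := by
    intro t ht
    have : s t ≤ l := by rw [← hs1]; exact hmono ht.2
    simp only [hS₂]; nlinarith
  have hI₁ : ∫ t in (0:ℝ)..t₀, (κ * v t) / S₁ t = Real.log (m + κ * (l / 2)) - Real.log m := by
    rw [integral_logDeriv ht₀.1 hm hS₁l hS₁p]
    · simp only [hS₁, hs0, hst₀]; simp
    · filter_upwards [hsder] with t ht ht'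
      exact ((ht ⟨ht'.1, ht'.2.trans ht₀.2⟩).const_mul κ).const_add m
  have hI₂ : ∫ t in t₀..1, (-(κ * v t)) / S₂ t = Real.log m - Real.log (m + κ * (l / 2)) := by
    rw [integral_logDeriv ht₀.2 hm hS₂l hS₂p]
    · simp only [hS₂, hs1, hst₀]
      rw [sub_self, mul_zero, add_zero]
      congr 3; ring
    · filter_upwards [hsder] with t ht ht'
      have := (((ht ⟨ht₀.1.trans ht'.1, ht'.2⟩).const_sub l).const_mul κ).const_add m
      convert! this using 1
      ring
  have hdi : ∀ a ∈ Set.Icc (0:ℝ) 1, ∀ b ∈ Set.Icc (0:ℝ) 1, ∀ F : ℝ → ℝ, Continuous F →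
      (∀ t ∈ Set.uIcc a b, F t ≠ 0) → IntervalIntegrable (fun t => v t / F t) volume a b := by
    intro a _ b _ F hF hF0
    simp only [div_eq_mul_inv]
    exact (hvi a b).mul_continuousOn (hF.continuousOn.inv₀ hF0)
  have h0m : (0:ℝ) ∈ Set.Icc (0:ℝ) 1 := by simp
  have h1m : (1:ℝ) ∈ Set.Icc (0:ℝ) 1 := by simp
  have hd₁ : IntervalIntegrable (fun t => v t / d t) volume 0 t₀ := by
    refine hdi 0 h0m t₀ ht₀ d hdcont fun t ht => (hdpos t ?_).ne'
    rw [Set.uIcc_of_le ht₀.1] at ht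
    exact ⟨ht.1, ht.2.trans ht₀.2⟩
  have hd₂ : IntervalIntegrable (fun t => v t / d t) volume t₀ 1 := by
    refine hdi t₀ ht₀ 1 h1m d hdcont fun t ht => (hdpos t ?_).ne'
    rw [Set.uIcc_of_le ht₀.2] at ht
    exact ⟨ht₀.1.trans ht.1, ht.2⟩
  have hκi : ∀ a ∈ Set.Icc (0:ℝ) 1, ∀ b ∈ Set.Icc (0:ℝ) 1, ∀ F : ℝ → ℝ, Continuous F →
      (∀ t ∈ Set.uIcc a b, F t ≠ 0) →
      IntervalIntegrable (fun t => 2 * A * ((κ * v t) / F t)) volume a b := by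
    intro a ha b hb F hF hF0
    have := (hdi a ha b hb F hF hF0).const_mul (2 * A * κ)
    convert! this using 2
    ring
  -- the pointwise bound, from the two lower bounds for `d`
  have hpt : ∀ t σ : ℝ, 0 < d t → 0 ≤ σ → σ ≤ A * d t → m - σ ≤ d t →
      v t / d t ≤ 2 * A * ((κ * v t) / (m + κ * σ)) := by
    intro t σ hdt hσ hσ1 hσ2
    have hpos : 0 < m + κ * σ := by positivity
    have hle : m + κ * σ ≤ 2 * A * κ * d t := by
      have : κ * σ = σ + σ / A := by rw [hκ]; field_simp
      have h5 : σ / A ≤ d t := by rw [div_le_iff₀ hA0]; linarith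
      nlinarith
    have hrw : 2 * A * ((κ * v t) / (m + κ * σ)) = v t * (2 * A * κ) / (m + κ * σ) := by ring
    rw [hrw, div_le_div_iff₀ hdt hpos]
    nlinarith [mul_le_mul_of_nonneg_left hle (hv0 t)]
  have hB₁ : ∫ t in (0:ℝ)..t₀, v t / d t ≤
      2 * A * (Real.log (m + κ * (l / 2)) - Real.log m) := by
    rw [← hI₁, ← intervalIntegral.integral_const_mul]
    refine intervalIntegral.integral_mono_on ht₀.1 hd₁ ?_ fun t ht => ?_
    · refine hκi 0 h0m t₀ ht₀ S₁ hS₁l.continuous fun t ht => ?_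
      rw [Set.uIcc_of_le ht₀.1] at ht
      exact (hm.trans_le (hS₁p t ht)).ne'
    · have htm : t ∈ Set.Icc (0:ℝ) 1 := ⟨ht.1, ht.2.trans ht₀.2⟩
      have hle : s t ≤ l / 2 := by rw [← hst₀]; exact hmono ht.2
      have hc := hcig t htm
      rw [hl2, min_eq_left (by change s t ≤ _; linarith)] at hc
      exact hpt t (s t) (hdpos t htm) (by rw [← hs0]; exact hmono ht.1) hc (hdx t htm)
  have hB₂ : ∫ t in t₀..1, v t / d t ≤
      2 * A * (Real.log (m + κ * (l / 2)) - Real.log m) := by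
    have hI₂' : ∫ t in t₀..1, (κ * v t) / S₂ t = Real.log (m + κ * (l / 2)) - Real.log m := by
      simp only [neg_div, intervalIntegral.integral_neg] at hI₂
      linarith
    rw [← hI₂', ← intervalIntegral.integral_const_mul]
    refine intervalIntegral.integral_mono_on ht₀.2 hd₂ ?_ fun t ht => ?_
    · refine hκi t₀ ht₀ 1 h1m S₂ hS₂l.continuous fun t ht => ?_
      rw [Set.uIcc_of_le ht₀.2] at ht
      exact (hm.trans_le (hS₂p t ht)).ne'
    · have htm : t ∈ Set.Icc (0:ℝ) 1 := ⟨ht₀.1.trans ht.1, ht.2⟩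
      have hle : l / 2 ≤ s t := by rw [← hst₀]; exact hmono ht.1
      have hle1 : s t ≤ l := by rw [← hs1]; exact hmono ht.2
      have hc := hcig t htm
      rw [hl2, min_eq_right (by change _ ≤ s t; linarith)] at hc
      exact hpt t (l - s t) (hdpos t htm) (by linarith) hc (hdy t htm)
  have hk : mQhDist D x y ≤ ∫ t in (0:ℝ)..1, v t / d t := by
    refine csInf_le ⟨0, ?_⟩ ⟨γ, ⟨⟨K, hK⟩, h0, h1, hin⟩, rfl⟩
    rintro L ⟨γ', _, rfl⟩
    exact intervalIntegral.integral_nonneg zero_le_one fun t _ =>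
      div_nonneg (mSpeed_nonneg _ _) Metric.infDist_nonneg
  rw [← intervalIntegral.integral_add_adjacent_intervals hd₁ hd₂] at hk
  set u : ℝ := dist x y / m with hu
  have hu0 : 0 ≤ u := by positivity
  have hum : u * m = dist x y := by rw [hu]; field_simp
  have hlog : Real.log (m + κ * (l / 2)) - Real.log m ≤ A * Real.log (1 + u) := by
    rw [← Real.log_div (by positivity) hm.ne', ← Real.log_rpow (by linarith)]
    refine Real.log_le_log (by positivity) ?_
    have hbern := one_add_mul_self_le_rpow_one_add (s := u) (by linarith) hA
    refine le_trans ?_ hbern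
    rw [div_le_iff₀ hm]
    have h6 : κ * l ≤ (A + 1) * dist x y := by
      rw [← hκA, mul_assoc]
      gcongr
    have h7 : (A + 1) * dist x y ≤ 2 * A * dist x y := by
      gcongr; linarith
    have h8 : (1 + A * u) * m = m + A * dist x y := by rw [← hum]; ring
    rw [h8]
    linarith
  have h9 : 2 * A * (Real.log (m + κ * (l / 2)) - Real.log m) ≤ 2 * A * (A * Real.log (1 + u)) := by
    gcongr
  calc mQhDist D x y ≤ _ := hk
    _ ≤ 2 * A * (A * Real.log (1 + u)) + 2 * A * (A * Real.log (1 + u)) := by linarith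
    _ = _ := by ring

/-! ### Boundary points and the quasisymmetric map -/

lemma frontier_nonempty_of_joined {X : Type*} [MetricSpace X]
    (hrc : ∀ x y : X, ∃ γ : ℝ → X,
      (∃ K : NNReal, LipschitzWith K γ) ∧ γ 0 = x ∧ γ 1 = y)
    {D : Set X} (hD0 : D.Nonempty) (hne : D ≠ Set.univ) : (frontier D).Nonempty := by
  have hpre : PreconnectedSpace X := by
    refine ⟨isPreconnected_of_forall_pair fun x _ y _ => ?_⟩
    obtain ⟨γ, ⟨K, hK⟩, h0, h1⟩ := hrc x y
    exact ⟨Set.range γ, Set.subset_univ _, ⟨0, h0⟩, ⟨1, h1⟩, isPreconnected_range hK.continuous⟩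
  exact nonempty_frontier_iff.mpr ⟨hD0, hne⟩

/-- A boundary diameter of `0` would force the open set `D` to be a single point, hence clopen. -/
lemma diam_frontier_pos {X : Type*} [MetricSpace X] {D : Set X} (hD : IsOpen D)
    (hfr : (frontier D).Nonempty) (hbdd : Bornology.IsBounded D) {M₁ : ℝ}
    (hdiam : Metric.diam D ≤ M₁ * Metric.diam (frontier D)) : 0 < Metric.diam (frontier D) := by
  refine lt_of_le_of_ne Metric.diam_nonneg fun h0 => ?_
  rw [← h0, mul_zero] at hdiam
  have hsub : D.Subsingleton := fun x hx y hy =>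
    dist_le_zero.mp ((Metric.dist_le_diam_of_mem hbdd hx hy).trans hdiam)
  have hclopen : IsClopen D := ⟨hsub.isClosed, hD⟩
  rw [hclopen.frontier_eq] at hfr
  exact Set.not_nonempty_empty hfr

/-- Half of the diameter is nearly realised from any base point `p`. -/
lemma exists_far_point {X : Type*} [MetricSpace X] {F : Set X} {M₁ L δ : ℝ}
    (hM₁ : 0 < M₁) (hL : L ≤ M₁ * Metric.diam F) {p : X} (hp : p ∈ F) (hδ : δ < L / (2 * M₁)) :
    ∃ q ∈ F, δ < dist p q := by
  by_contra! hcon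
  have hδ0 : 0 ≤ δ := by simpa using hcon p hp
  have h1 : Metric.diam F ≤ 2 * δ := by
    refine Metric.diam_le_of_forall_dist_le (by linarith) fun a ha b hb => ?_
    linarith [dist_triangle_left a b p, hcon a ha, hcon b hb]
  rw [lt_div_iff₀ (by positivity)] at hδ
  nlinarith

/-- As `g` fixes the boundary pointwise, `η` must dominate ratios of distances between boundary
points, and uniform perfectness provides such ratios in the range `(2M₁, 2M₁C]`. -/
lemma two_mul_lt_ctrl {X : Type*} [MetricSpace X] {D : Set X} (hD0 : (frontier D).Nonempty)
    (hpos : 0 < Metric.diam (frontier D))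
    {C : ℝ} (hC : 1 < C) (hperf : UnifPerfectWith dist (frontier D) C) {M₁ : ℝ} (hM₁ : 1 ≤ M₁)
    {η : ℝ → ℝ} {g : X → X} (hqs : QSWith dist dist (closure D) g η)
    (hid : Set.EqOn g id (frontier D)) : 2 * M₁ < η (2 * M₁ * C) := by
  obtain ⟨p, hp⟩ := hD0
  obtain ⟨q, hq, hpq⟩ := exists_far_point (F := frontier D) (M₁ := 1) (δ := 0)
    one_pos (le_of_eq (one_mul _).symm) hp (by positivity)
  have hC0 : 0 < C := by linarith
  obtain ⟨q', hq', h1, h2⟩ := hperf p hp (dist p q / (2 * M₁)) (by positivity)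
    ⟨q, hq, div_le_self hpq.le (by linarith)⟩
  have hsub := frontier_subset_closure (s := D)
  have h3 := hqs (2 * M₁ * C) (by positivity) p (hsub hp) q (hsub hq) q' (hsub hq') (by
    rw [div_div, div_le_iff₀ (by positivity)] at h2
    linarith)
  rw [hid hp, hid hq, hid hq'] at h3
  simp only [id] at h3
  rw [lt_div_iff₀ (by positivity)] at h1
  by_contra! hcon
  have h4 : η (2 * M₁ * C) * dist p q' ≤ 2 * M₁ * dist p q' :=
    mul_le_mul_of_nonneg_right hcon dist_nonneg
  linarith

/-- Teichmüller bound in bounded uniform metric spaces.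
Let `X` be a locally compact, rectifiably connected, complete metric space and `D ⊊ X` a
bounded `A`-uniform domain whose metric boundary `∂D` is `C`-uniformly perfect and
satisfies `diam(D) ≤ M₁ diam(∂D)`.  Let `η` be a homeomorphism of `[0,∞)` and
`g : cl(D) → cl(D)` an `η`-quasisymmetric homeomorphism which is the identity on `∂D`.
Then `k_D(x, g(x)) ≤ Λ = 4A² log(1 + M₃(M₃+1))` for all `x ∈ D`, where
`M₃ = 4η(2M₁C)`. -/
theorem stmt19 {X : Type*} [MetricSpace X] [CompleteSpace X] [LocallyCompactSpace X]
    (hrc : ∀ x y : X, ∃ γ : ℝ → X,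
      (∃ K : NNReal, LipschitzWith K γ) ∧ γ 0 = x ∧ γ 1 = y)
    (D : Set X) (hD : IsOpen D) (hconn : IsConnected D) (hne : D ≠ Set.univ)
    (hbdd : Bornology.IsBounded D)
    (A : ℝ) (hA : 1 ≤ A) (hunif : mUniform D A)
    (C : ℝ) (hC : 1 < C) (hperf : UnifPerfectWith dist (frontier D) C)
    (M₁ : ℝ) (hM₁ : 1 ≤ M₁)
    (hdiam : Metric.diam D ≤ M₁ * Metric.diam (frontier D))
    (η : ℝ → ℝ) (hη : CtrlFun η)
    (g : X → X) (hg : HomeoOn g (closure D))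
    (hqs : QSWith dist dist (closure D) g η)
    (hid : Set.EqOn g id (frontier D)) :
    ∀ x ∈ D, mQhDist D x (g x) ≤
      4 * A ^ 2 * Real.log (1 + (4 * η (2 * M₁ * C)) * (4 * η (2 * M₁ * C) + 1)) := by
  intro x hx
  have hfr := frontier_nonempty_of_joined hrc hconn.nonempty hne
  have hpos := diam_frontier_pos hD hfr hbdd hdiam
  have hE := two_mul_lt_ctrl hfr hpos hC hperf hM₁ hqs hid
  have hsub := frontier_subset_closure (s := D)
  set E : ℝ := η (2 * M₁ * C) with hEdef
  have hC0 : 0 < C := by linarith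
  have hM0 : 0 < M₁ := by linarith
  have hE0 : 0 < E := by linarith
  have hfg : ∀ z, z ∈ D ↔ z ∈ closure D ∧ z ∉ frontier D := by
    intro z
    rw [hD.frontier_eq]
    exact ⟨fun h => ⟨subset_closure h, fun h' => h'.2 h⟩,
      fun h => by_contra fun hz => h.2 ⟨h.1, hz⟩⟩
  -- injectivity of `g` keeps interior points away from the pointwise fixed boundary
  have hgx : g x ∈ D := by
    have hxc := subset_closure hx
    rw [hfg]
    refine ⟨hg.1.mapsTo hxc, fun hmem => ?_⟩
    have h1 : g (g x) = g x := hid hmem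
    have h2 : g x = x := hg.1.injOn (hsub hmem) hxc h1
    rw [h2] at hmem
    exact ((hfg x).mp hx).2 hmem
  have hdpos : ∀ z ∈ D, 0 < Metric.infDist z (frontier D) := fun z hz =>
    (isClosed_frontier.notMem_iff_infDist_pos hfr).mp ((hfg z).mp hz).2
  have hnear : ∀ z ∈ D, ∃ p ∈ frontier D, dist z p < 2 * Metric.infDist z (frontier D) :=
    fun z hz => (Metric.infDist_lt_iff hfr).mp (by linarith [hdpos z hz])
  have hLd : ∀ p ∈ frontier D, dist p x ≤ M₁ * Metric.diam (frontier D) := by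
    intro p hp
    refine le_trans ?_ hdiam
    rw [← Metric.diam_closure]
    exact Metric.dist_le_diam_of_mem hbdd.closure (hsub hp) (subset_closure hx)
  have hLpos : ∀ p ∈ frontier D, 0 < dist p x := by
    intro p hp
    refine dist_pos.mpr ?_
    rintro rfl
    exact ((hfg p).mp hx).2 hp
  set U : ℝ := 4 * E * (4 * E + 1) with hU
  -- `g x` cannot be far away from the boundary, compared with `x`
  have hdx : dist x (g x) ≤ U * Metric.infDist x (frontier D) := by
    obtain ⟨p, hp, hxp⟩ := hnear x hx
    have hL := hLpos p hp
    obtain ⟨q, hq, hq1, hq2⟩ : ∃ q ∈ frontier D, dist p q ≤ dist p x ∧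
        dist p x ≤ 2 * M₁ * C * dist p q := by
      obtain ⟨y, hy, hpy⟩ := exists_far_point hM0 (hLd p hp) hp
        (δ := dist p x / (2 * M₁ * C)) (by
          rw [← div_div]
          exact div_lt_self (by positivity) hC)
      rw [div_lt_iff₀ (by positivity)] at hpy
      rcases le_or_gt (dist p y) (dist p x) with h | h
      · exact ⟨y, hy, h, by linarith⟩
      · obtain ⟨q, hq, h1, h2⟩ := hperf p hp _ hL ⟨y, hy, h.le⟩
        refine ⟨q, hq, h1.le, ?_⟩
        rw [div_le_iff₀ hC0] at h2
        nlinarith [mul_nonneg (dist_nonneg (x := p) (y := q)) hC0.le]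
    have h3 := hqs (2 * M₁ * C) (by positivity) p (hsub hp) x (subset_closure hx) q (hsub hq) hq2
    rw [hid hp, hid hq, ← hEdef] at h3
    simp only [id] at h3
    have h4 : E * dist p q ≤ E * dist p x := by gcongr
    have h5 := dist_triangle_left x (g x) p
    rw [dist_comm x p] at hxp
    have h6 : dist x (g x) ≤ (1 + E) * (2 * Metric.infDist x (frontier D)) := by nlinarith
    refine h6.trans ?_
    rw [← mul_assoc]
    exact mul_le_mul_of_nonneg_right (by rw [hU]; nlinarith) Metric.infDist_nonneg
  -- `g x` cannot be much closer to the boundary than `x`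
  have hdg : dist x (g x) ≤ U * Metric.infDist (g x) (frontier D) := by
    obtain ⟨p, hp, hxp⟩ := hnear (g x) hgx
    have hL := hLpos p hp
    obtain ⟨q, hq, hq1, hq2⟩ : ∃ q ∈ frontier D, dist p q ≤ 2 * M₁ * C * dist p x ∧
        dist p x ≤ 4 * M₁ * dist p q := by
      obtain ⟨y, hy, hpy⟩ := exists_far_point hM0 (hLd p hp) hp
        (δ := dist p x / (4 * M₁)) (by gcongr; norm_num)
      rw [div_lt_iff₀ (by positivity)] at hpy
      rcases le_or_gt (dist p y) (2 * M₁ * C * dist p x) with h | h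
      · exact ⟨y, hy, h, by linarith⟩
      · obtain ⟨q, hq, h1, h2⟩ := hperf p hp _ (by positivity) ⟨y, hy, h.le⟩
        refine ⟨q, hq, h1.le, ?_⟩
        rw [div_le_iff₀ hC0] at h2
        have h7 : 2 * M₁ * dist p x ≤ dist p q := by
          refine le_of_mul_le_mul_right ?_ hC0
          linarith
        have h8 : dist p x ≤ 2 * M₁ * dist p x := le_mul_of_one_le_left hL.le (by linarith)
        have h9 : dist p q ≤ 4 * M₁ * dist p q :=
          le_mul_of_one_le_left dist_nonneg (by linarith)
        linarith
    have h3 := hqs (2 * M₁ * C) (by positivity) p (hsub hp) q (hsub hq) x (subset_closure hx) hq1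
    rw [hid hp, hid hq, ← hEdef] at h3
    simp only [id] at h3
    have h4 : dist p x ≤ 4 * M₁ * (E * dist p (g x)) := hq2.trans (by gcongr)
    have h5 := dist_triangle_left x (g x) p
    rw [dist_comm (g x) p] at hxp
    have h6 : 4 * M₁ * (E * dist p (g x)) ≤ 2 * E * (E * dist p (g x)) :=
      mul_le_mul_of_nonneg_right (by linarith) (by positivity)
    have h7 : dist x (g x) ≤ (2 * E * E + 1) * (2 * Metric.infDist (g x) (frontier D)) := by
      have : dist x (g x) ≤ (2 * E * E + 1) * dist p (g x) := by linarith
      exact this.trans (by gcongr)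
    refine h7.trans ?_
    rw [← mul_assoc]
    exact mul_le_mul_of_nonneg_right (by rw [hU]; nlinarith) Metric.infDist_nonneg
  set m : ℝ := min (Metric.infDist x (frontier D)) (Metric.infDist (g x) (frontier D)) with hm
  have hm0 : 0 < m := lt_min (hdpos x hx) (hdpos _ hgx)
  refine (mQhDist_le hD hfr hA hunif hx hgx hm0 (min_le_left _ _) (min_le_right _ _)).trans ?_
  have hratio : dist x (g x) / m ≤ U := by
    rw [div_le_iff₀ hm0]
    rcases min_choice (Metric.infDist x (frontier D)) (Metric.infDist (g x) (frontier D))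
      with h | h
    · rw [hm, h]; exact hdx
    · rw [hm, h]; exact hdg
  gcongr

end
end
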